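/- Let λ₁, λ₂ : ℂ → ℂ be smooth functions and ρ : ℂ → ℝ a smooth real-valued function satisfying 2i·∂λ₂ = ρ·λ₁ and 2i·∂̄λ₁ = ρ·λ₂ on ℂ. Set λ = λ₁ + j·λ₂ : ℂ → ℍ, P(z) = conj(λ(z))·j·λ(z), and Q(z) = −conj(λ(z))·k·λ(z). Then ∂P/∂y = ∂Q/∂x on all of ℂ; that is, the ℍ-valued 1-form η = P dx + Q dy (the spin transform λ̄·df·λ of the plane f(x+iy) = x·j − y·k) is closed. -/

import Mathlib

/-- The imaginary unit `j` of the quaternions. -/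
def qj : Quaternion ℝ := ⟨0, 0, 1, 0⟩

/-- The imaginary unit `k` of the quaternions. -/
def qk : Quaternion ℝ := ⟨0, 0, 0, 1⟩

/-- The embedding of `ℂ` into the quaternions, `a + b·i ↦ a + b·i`. -/
def CtoQ (z : ℂ) : Quaternion ℝ := ⟨z.re, z.im, 0, 0⟩

/-- Wirtinger derivative `∂g = ½(∂g/∂x − i ∂g/∂y)`. -/
noncomputable def wderiv (g : ℂ → ℂ) (z : ℂ) : ℂ :=
  (1 / 2) * (fderiv ℝ g z 1 - Complex.I * fderiv ℝ g z Complex.I)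

/-- Conjugate Wirtinger derivative `∂̄g = ½(∂g/∂x + i ∂g/∂y)`. -/
noncomputable def wderivBar (g : ℂ → ℂ) (z : ℂ) : ℂ :=
  (1 / 2) * (fderiv ℝ g z 1 + Complex.I * fderiv ℝ g z Complex.I)

/-!
With `X = λ̄ (j λ_y + k λ_x)`, skew-adjointness of `j` and `k` gives
`(λ̄ j λ)_y + (λ̄ k λ)_x = X - X̄`, so the form is closed as soon as `X` is real. This is the case
when `λ` solves the Dirac equation `-(j λ_y + k λ_x) = ρ λ` with `ρ` real, for then `X = -ρ |λ|²`.
In terms of `λ = λ₁ + j λ₂` the left-hand side is `2i ∂λ₂ + j (2i ∂̄λ₁)`, so the two given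
equations are the components of the Dirac equation.
-/

section StarAlgebra

variable {𝕜 E A : Type*} [NontriviallyNormedField 𝕜] [StarRing 𝕜] [TrivialStar 𝕜]
  [NormedAddCommGroup E] [NormedSpace 𝕜 E]
  [NormedRing A] [NormedAlgebra 𝕜 A] [StarRing A] [StarModule 𝕜 A] [ContinuousStar A]

theorem fderiv_star_mul_mul_apply {f : E → A} {x : E} (hf : DifferentiableAt 𝕜 f x) (a : A)
    (v : E) :
    fderiv 𝕜 (fun y => star (f y) * a * f y) x v =
      star (f x) * a * fderiv 𝕜 f x v + star (fderiv 𝕜 f x v) * a * f x := by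
  rw [((hf.hasFDerivAt.star.mul_const' a).fun_mul' hf.hasFDerivAt).fderiv]
  simp

theorem fderiv_star_mul_mul_apply_of_mem_skewAdjoint {f : E → A} {x : E}
    (hf : DifferentiableAt 𝕜 f x) {a : A} (ha : a ∈ skewAdjoint A) (v : E) :
    fderiv 𝕜 (fun y => star (f y) * a * f y) x v =
      star (f x) * (a * fderiv 𝕜 f x v) - star (star (f x) * (a * fderiv 𝕜 f x v)) := by
  rw [fderiv_star_mul_mul_apply hf]
  simp [skewAdjoint.mem_iff.mp ha, mul_assoc]

theorem fderiv_star_mul_mul_add_eq_zero {f : E → A} {x : E} (hf : DifferentiableAt 𝕜 f x)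
    {a b : A} (ha : a ∈ skewAdjoint A) (hb : b ∈ skewAdjoint A) {u v : E} {r : 𝕜}
    (h : a * fderiv 𝕜 f x u + b * fderiv 𝕜 f x v = r • f x) :
    fderiv 𝕜 (fun y => star (f y) * a * f y) x u +
      fderiv 𝕜 (fun y => star (f y) * b * f y) x v = 0 := by
  have hself : IsSelfAdjoint (star (f x) * (a * fderiv 𝕜 f x u + b * fderiv 𝕜 f x v)) := by
    rw [h, mul_smul_comm]
    exact (IsSelfAdjoint.all r).smul (.star_mul_self (f x))
  rw [fderiv_star_mul_mul_apply_of_mem_skewAdjoint hf ha,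
    fderiv_star_mul_mul_apply_of_mem_skewAdjoint hf hb, sub_add_sub_comm, ← star_add, ← mul_add,
    hself.star_eq, sub_self]

end StarAlgebra

instance instStarModuleQuaternion {S R : Type*} [CommRing R] [Monoid S] [DistribMulAction S R]
    [Star S] [TrivialStar S] : StarModule S (Quaternion R) where
  star_smul s q := by rw [Quaternion.star_smul, star_trivial s]

attribute [simps] qj qk CtoQ

theorem qj_mem_skewAdjoint : qj ∈ skewAdjoint (Quaternion ℝ) := by
  rw [skewAdjoint.mem_iff]
  ext <;> simp

theorem qk_mem_skewAdjoint : qk ∈ skewAdjoint (Quaternion ℝ) := by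
  rw [skewAdjoint.mem_iff]
  ext <;> simp

/-- The Dirac operator `ψ ↦ -(df ∧ dψ) / |df|²` of the plane `f(x + iy) = x j - y k` in `ℍ`,
where `df ∧ dψ = (j ∂ψ/∂y + k ∂ψ/∂x) dx ∧ dy` and the area form `|df|²` is `dx ∧ dy`. -/
noncomputable def planeDirac (ψ : ℂ → Quaternion ℝ) (z : ℂ) : Quaternion ℝ :=
  -(qj * fderiv ℝ ψ z Complex.I + qk * fderiv ℝ ψ z 1)

theorem spin_form_closed_of_planeDirac_eq_smul {ψ : ℂ → Quaternion ℝ} {z : ℂ} {r : ℝ}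
    (hψ : DifferentiableAt ℝ ψ z) (hD : planeDirac ψ z = r • ψ z) :
    fderiv ℝ (fun w => star (ψ w) * qj * ψ w) z Complex.I =
      fderiv ℝ (fun w => -(star (ψ w) * qk * ψ w)) z 1 := by
  rw [fderiv_fun_neg, neg_apply, ← add_eq_zero_iff_eq_neg]
  refine fderiv_star_mul_mul_add_eq_zero hψ qj_mem_skewAdjoint qk_mem_skewAdjoint (r := -r) ?_
  rw [neg_smul, ← hD, planeDirac, neg_neg]

/-- The splitting `ℍ = ℂ ⊕ j ℂ`, as the real-linear map `(a, b) ↦ a + j b`. -/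
noncomputable def ofComplexPair : ℂ × ℂ →L[ℝ] Quaternion ℝ :=
  (Quaternion.ofComplex.toLinearMap.coprod
    (LinearMap.mulLeft ℝ qj ∘ₗ Quaternion.ofComplex.toLinearMap)).toContinuousLinearMap

theorem ofComplexPair_apply (a b : ℂ) : ofComplexPair (a, b) = CtoQ a + qj * CtoQ b := rfl

theorem qj_mul_ofComplexPair (a b : ℂ) : qj * ofComplexPair (a, b) = ofComplexPair (-b, a) := by
  rw [ofComplexPair_apply, ofComplexPair_apply]
  ext <;> simp

theorem qk_mul_ofComplexPair (a b : ℂ) :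
    qk * ofComplexPair (a, b) = ofComplexPair (-(Complex.I * b), -(Complex.I * a)) := by
  rw [ofComplexPair_apply, ofComplexPair_apply]
  ext <;> simp

theorem two_mul_I_mul_wderiv (g : ℂ → ℂ) (z : ℂ) :
    2 * Complex.I * wderiv g z = Complex.I * fderiv ℝ g z 1 + fderiv ℝ g z Complex.I := by
  rw [wderiv]
  linear_combination -fderiv ℝ g z Complex.I * Complex.I_sq

theorem two_mul_I_mul_wderivBar (g : ℂ → ℂ) (z : ℂ) :
    2 * Complex.I * wderivBar g z = Complex.I * fderiv ℝ g z 1 - fderiv ℝ g z Complex.I := by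
  rw [wderivBar]
  linear_combination fderiv ℝ g z Complex.I * Complex.I_sq

theorem planeDirac_ofComplexPair {f g : ℂ → ℂ} {z : ℂ} (hf : DifferentiableAt ℝ f z)
    (hg : DifferentiableAt ℝ g z) :
    planeDirac (fun w => ofComplexPair (f w, g w)) z =
      ofComplexPair (2 * Complex.I * wderiv g z, 2 * Complex.I * wderivBar f z) := by
  have hderiv (v : ℂ) : fderiv ℝ (fun w => ofComplexPair (f w, g w)) z v =
      ofComplexPair (fderiv ℝ f z v, fderiv ℝ g z v) :=
    DFunLike.congr_fun
      (ofComplexPair.hasFDerivAt.comp z (hf.hasFDerivAt.prodMk hg.hasFDerivAt)).fderiv v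
  rw [planeDirac, hderiv, hderiv, qj_mul_ofComplexPair, qk_mul_ofComplexPair, ← map_add, ← map_neg,
    two_mul_I_mul_wderiv, two_mul_I_mul_wderivBar]
  congr 1
  ext1 <;> simp only [Prod.mk_add_mk, Prod.neg_mk] <;> ring

theorem spin_form_closed_general {l1 l2 : ℂ → ℂ} {ρ : ℝ} {z : ℂ}
    (h1 : DifferentiableAt ℝ l1 z) (h2 : DifferentiableAt ℝ l2 z)
    (heq1 : 2 * Complex.I * wderiv l2 z = (ρ : ℂ) * l1 z)
    (heq2 : 2 * Complex.I * wderivBar l1 z = (ρ : ℂ) * l2 z)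
    {lam : ℂ → Quaternion ℝ} (hlam : ∀ w : ℂ, lam w = CtoQ (l1 w) + qj * CtoQ (l2 w)) :
    fderiv ℝ (fun w : ℂ => star (lam w) * qj * lam w) z Complex.I =
      fderiv ℝ (fun w : ℂ => -(star (lam w) * qk * lam w)) z 1 := by
  obtain rfl : lam = fun w => ofComplexPair (l1 w, l2 w) := funext hlam
  refine spin_form_closed_of_planeDirac_eq_smul
    (ofComplexPair.differentiableAt.comp z (h1.prodMk h2)) (r := ρ) ?_
  rw [planeDirac_ofComplexPair h1 h2, heq1, heq2, ← map_smul, Prod.smul_mk, Complex.real_smul,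
    Complex.real_smul]

/-- If smooth `λ₁, λ₂ : ℂ → ℂ` and a smooth real `ρ` satisfy `2i∂λ₂ = ρλ₁` and
`2i∂̄λ₁ = ρλ₂`, then for `λ = λ₁ + jλ₂` the `ℍ`-valued 1-form
`η = (λ̄ j λ) dx + (−λ̄ k λ) dy` is closed: `∂P/∂y = ∂Q/∂x` on all of `ℂ`. -/
theorem spin_form_closed (l1 l2 : ℂ → ℂ) (ρ : ℂ → ℝ)
    (h1 : ContDiff ℝ (⊤ : ℕ∞) l1) (h2 : ContDiff ℝ (⊤ : ℕ∞) l2) (hρ : ContDiff ℝ (⊤ : ℕ∞) ρ)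
    (heq1 : ∀ z : ℂ, 2 * Complex.I * wderiv l2 z = (ρ z : ℂ) * l1 z)
    (heq2 : ∀ z : ℂ, 2 * Complex.I * wderivBar l1 z = (ρ z : ℂ) * l2 z)
    (lam : ℂ → Quaternion ℝ)
    (hlam : ∀ w : ℂ, lam w = CtoQ (l1 w) + qj * CtoQ (l2 w)) :
    ∀ z : ℂ,
      fderiv ℝ (fun w : ℂ => star (lam w) * qj * lam w) z Complex.I =
        fderiv ℝ (fun w : ℂ => -(star (lam w) * qk * lam w)) z 1 := by
  intro z
  exact spin_form_closed_general (h1.differentiable (by simp) z) (h2.differentiable (by simp) z)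
    (heq1 z) (heq2 z) hlam
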